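/- arXiv:1001.4181 — 6 statements merged into one kernel-verified Lean document; each statement's English description precedes it below -/
import Mathlib

section
/- Let N ∈ ℕ and let x = (x₁,…,x_N) and y = (y₁,…,y_N) be zero-mean jointly Gaussian real random vectors on a probability space. Then E[x_k | y₁,…,y_k] = y_k almost surely for every k = 1,…,N if and only if [K_y]_{j,k} = [K_{yx}]_{j,k} for all indices 1 ≤ j ≤ k ≤ N (i.e., K_y and K_{yx} have identical entries on and above their main diagonals). -/
/-!
The error `x_k - y_k` governs both sides. If `E[x_k | y₁,…,y_k] = y_k`, then for `j ≤ k` the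
variable `y_j` is measurable with respect to the conditioning σ-algebra, so pulling it out of the
conditional expectation gives `E[y_j x_k] = E[y_j y_k]`. Conversely, equality of these moments for
all `j ≤ k` says that `x_k - y_k` is uncorrelated with `(y₁,…,y_k)`; by joint Gaussianity it is
independent of that vector, hence has conditional expectation equal to its mean `0`, and since
`y_k` is measurable with respect to the conditioning σ-algebra, `E[x_k | y₁,…,y_k] = y_k`.
-/

open MeasureTheory ProbabilityTheory

/-- Two random vectors `x, y : Ω → (Fin n → ℝ)` are jointly Gaussian if every real linear
combination of their components has a Gaussian distribution. -/
def IsJointlyGaussianPair {Ω : Type*} [MeasurableSpace Ω] (μ : Measure Ω) {n : ℕ}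
    (x y : Ω → Fin n → ℝ) : Prop :=
  ∀ a b : Fin n → ℝ, ∃ (m : ℝ) (v : NNReal),
    Measure.map (fun ω => (∑ i, a i * x ω i) + ∑ i, b i * y ω i) μ = gaussianReal m v

/-- Gaussianity of all linear combinations of the components makes the `ℝ^N × ℝ^N`-valued
random vector `(x, y)` Gaussian, since every linear functional is such a combination. -/
lemma IsJointlyGaussianPair.hasGaussianLaw {Ω : Type*} [MeasurableSpace Ω] {μ : Measure Ω}
    {N : ℕ} {x y : Ω → Fin N → ℝ} (hmx : Measurable x) (hmy : Measurable y)
    (hG : IsJointlyGaussianPair μ x y) :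
    HasGaussianLaw (fun ω => (x ω, y ω)) μ := by
  refine ⟨isGaussian_of_map_eq_gaussianReal fun L => ?_⟩
  obtain ⟨m, v, h⟩ := hG (fun i => L (Pi.single i 1, 0)) (fun i => L (0, Pi.single i 1))
  refine ⟨m, v, ?_⟩
  rw [← h, Measure.map_map (by fun_prop) (by fun_prop)]
  congr 1
  ext ω
  have hsingle : ∀ i : Fin N, (Pi.single i 1 : Fin N → ℝ) = fun j => if i = j then 1 else 0 := by
    intro i
    ext j
    simp [Pi.single_apply, eq_comm]
  have hx : L (x ω, 0) = ∑ i, L (Pi.single i 1, 0) * x ω i := by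
    have := (L.comp (ContinuousLinearMap.inl ℝ (Fin N → ℝ) (Fin N → ℝ))).toLinearMap
      |>.pi_apply_eq_sum_univ (x ω)
    simpa [mul_comm, hsingle] using this
  have hy : L (0, y ω) = ∑ i, L (0, Pi.single i 1) * y ω i := by
    have := (L.comp (ContinuousLinearMap.inr ℝ (Fin N → ℝ) (Fin N → ℝ))).toLinearMap
      |>.pi_apply_eq_sum_univ (y ω)
    simpa [mul_comm, hsingle] using this
  rw [← hx, ← hy, ← map_add]
  simp

/-- MMSE triangular correspondence: for zero-mean jointly Gaussian vectors
`x = (x₁,…,x_N)` and `y = (y₁,…,y_N)`, one has `E[x_k | y₁,…,y_k] = y_k` a.s. for every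
`k = 1,…,N` iff `[K_y]_{j,k} = [K_{yx}]_{j,k}` for all `j ≤ k`, i.e. `K_y` and `K_{yx}` have
identical entries on and above their main diagonals. -/
theorem mmse_triangular_correspondence
    {Ω : Type*} [MeasurableSpace Ω] (μ : Measure Ω) [IsProbabilityMeasure μ]
    (N : ℕ) (x y : Ω → Fin N → ℝ)
    (hmx : Measurable x) (hmy : Measurable y)
    (hG : IsJointlyGaussianPair μ x y)
    (hx0 : ∀ i, ∫ ω, x ω i ∂μ = 0) (hy0 : ∀ i, ∫ ω, y ω i ∂μ = 0) :
    (∀ k : Fin N,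
        μ[(fun ω => x ω k) |
            MeasurableSpace.comap (fun ω (i : Fin (k.1 + 1)) => y ω (Fin.castLE k.isLt i))
              inferInstance]
          =ᵐ[μ] fun ω => y ω k)
      ↔ ∀ j k : Fin N, j ≤ k →
          ∫ ω, y ω j * y ω k ∂μ = ∫ ω, y ω j * x ω k ∂μ := by
  have hxy := hG.hasGaussianLaw hmx hmy
  let px : Fin N → (Fin N → ℝ) × (Fin N → ℝ) →L[ℝ] ℝ := fun i =>
    (ContinuousLinearMap.proj (R := ℝ) (φ := fun _ : Fin N => ℝ) i).comp
      (ContinuousLinearMap.fst ℝ (Fin N → ℝ) (Fin N → ℝ))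
  let py : Fin N → (Fin N → ℝ) × (Fin N → ℝ) →L[ℝ] ℝ := fun i =>
    (ContinuousLinearMap.proj (R := ℝ) (φ := fun _ : Fin N => ℝ) i).comp
      (ContinuousLinearMap.snd ℝ (Fin N → ℝ) (Fin N → ℝ))
  have hx2 : ∀ i, MemLp (fun ω => x ω i) 2 μ := fun i =>
    (hxy.map (px i)).memLp_two
  have hy2 : ∀ i, MemLp (fun ω => y ω i) 2 μ := fun i =>
    (hxy.map (py i)).memLp_two
  have hxi : ∀ i, Integrable (fun ω => x ω i) μ := fun i => (hx2 i).integrable one_le_two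
  have hyi : ∀ i, Integrable (fun ω => y ω i) μ := fun i => (hy2 i).integrable one_le_two
  have hle : ∀ k : Fin N,
      MeasurableSpace.comap (fun ω (i : Fin (k.1 + 1)) => y ω (Fin.castLE k.isLt i))
        inferInstance ≤ ‹MeasurableSpace Ω› := fun k =>
    Measurable.comap_le (by fun_prop)
  have hmeas : ∀ j k : Fin N, j ≤ k → StronglyMeasurable[
      MeasurableSpace.comap (fun ω (i : Fin (k.1 + 1)) => y ω (Fin.castLE k.isLt i))
        inferInstance] (fun ω => y ω j) := by
    intro j k hjk
    have h := (measurable_pi_apply (X := fun _ : Fin (k.1 + 1) => ℝ)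
      (⟨j.1, Nat.lt_succ_of_le hjk⟩ : Fin (k.1 + 1))).comp (comap_measurable
      (fun ω (i : Fin (k.1 + 1)) => y ω (Fin.castLE k.isLt i)))
    exact h.stronglyMeasurable
  constructor
  · intro h j k hjk
    have h1 := condExp_mul_of_stronglyMeasurable_left (μ := μ) (g := fun ω => x ω k)
      (hmeas j k hjk) ((hy2 j).integrable_mul (hx2 k)) (hxi k)
    have h2 := integral_condExp (μ := μ) (f := (fun ω => y ω j) * fun ω => x ω k) (hle k)
    rw [integral_congr_ae h1] at h2
    refine Eq.trans (integral_congr_ae ?_) h2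
    filter_upwards [h k] with ω hω
    simp [hω]
  · intro h k
    -- The one-dimensional error is encoded as a `Unit`-indexed vector.
    have hlaw : HasGaussianLaw (fun ω => ((fun _ : Unit => x ω k - y ω k),
        (fun i : Fin (k.1 + 1) => y ω (Fin.castLE k.isLt i)))) μ :=
      hxy.map (ContinuousLinearMap.prod
        (ContinuousLinearMap.pi fun _ : Unit => px k - py k)
        (ContinuousLinearMap.pi fun i : Fin (k.1 + 1) => py (Fin.castLE k.isLt i)))
    have hind := HasGaussianLaw.indepFun_of_covariance_eval
      (X := fun (_ : Unit) ω => x ω k - y ω k)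
      (Y := fun (i : Fin (k.1 + 1)) ω => y ω (Fin.castLE k.isLt i)) hlaw (by
        intro _ i
        have hik : Fin.castLE k.isLt i ≤ k := Nat.le_of_lt_succ i.isLt
        rw [covariance_eq_sub (X := fun ω => x ω k - y ω k) ((hx2 k).sub (hy2 k)) (hy2 _),
          hy0, mul_zero, sub_zero]
        have hi := h _ _ hik
        have : (fun ω => x ω k - y ω k) * (fun ω => y ω (Fin.castLE k.isLt i)) =
            fun ω => y ω (Fin.castLE k.isLt i) * x ω k
              - y ω (Fin.castLE k.isLt i) * y ω k := by
          ext ω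
          simp only [Pi.mul_apply]
          ring
        rw [this]
        refine (integral_sub ((hy2 _).integrable_mul (hx2 k))
          ((hy2 _).integrable_mul (hy2 k))).trans ?_
        exact sub_eq_zero.mpr hi.symm)
    have hind' : IndepFun (fun ω => x ω k - y ω k)
        (fun ω (i : Fin (k.1 + 1)) => y ω (Fin.castLE k.isLt i)) μ :=
      hind.comp (measurable_pi_apply ()) measurable_id
    have hcond := condExp_indep_eq (μ := μ) (f := fun ω => x ω k - y ω k)
      (Measurable.comap_le (by fun_prop)) (hle k)
      (comap_measurable _).stronglyMeasurable hind'
    have hsub := condExp_sub (hxi k) (hyi k)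
      (MeasurableSpace.comap (fun ω (i : Fin (k.1 + 1)) => y ω (Fin.castLE k.isLt i))
        inferInstance)
    have hself := condExp_of_stronglyMeasurable (hle k) (hmeas k k le_rfl) (hyi k)
    have hmean : ∫ ω, (x ω k - y ω k) ∂μ = 0 := by
      rw [integral_sub (hxi k) (hyi k), hx0, hy0, sub_self]
    rw [hself] at hsub
    filter_upwards [hcond, hsub] with ω h1 h2
    rw [hmean] at h1
    have h3 := h2.symm.trans h1
    exact sub_eq_zero.mp h3
end

section
/- Let ℓ ≥ 1, σ₁² > 0, a₁,…,a_{ℓ−1} ∈ ℝ, σ_{ξ,1}²,…,σ_{ξ,ℓ−1}² > 0 and D₁,…,D_ℓ > 0. Define the effective distortions recursively by d₁ := min{σ₁², D₁} and d_k := min{a_{k−1}² d_{k−1} + σ_{ξ,k−1}², D_k} for k = 2,…,ℓ. Let Z := { z ∈ ℝ^ℓ : 0 < z₁ ≤ min{σ₁², D₁} and 0 < z_k ≤ min{a_{k−1}² z_{k−1} + σ_{ξ,k−1}², D_k} for k = 2,…,ℓ }, and define F : Z → ℝ by F(z) := (1/2ℓ) ln(σ₁²/z₁) + (1/2ℓ)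 Σ_{k=2}^{ℓ} ln((a_{k−1}² z_{k−1} + σ_{ξ,k−1}²)/z_k). Then: (a) the vector d = (d₁,…,d_ℓ) belongs to Z and is its greatest element, i.e., z_k ≤ d_k for every z ∈ Z and every k; and (b) F attains its minimum over Z uniquely at z = d, i.e., F(z) > F(d) for every z ∈ Z with z ≠ d. -/
/-!
Monotonicity of `z ↦ a² z + s` gives `z_k ≤ d_k` for all feasible `z` by induction, so `d` is the
greatest feasible vector. For the minimum, regroup the sum by coordinate: up to the factor
`1 / (2ℓ)`,
`F z = log σ₁² + ∑_{k < ℓ} (log (a_k² z_k + s_k) - log z_k) - log z_ℓ`,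
so each coordinate enters through a single strictly decreasing function
(`log (a² z + s) - log z = log (a² + s / z)`, see `log_affine_sub_log_lt`). Since `z ≤ d`
coordinatewise, `F d ≤ F z`, strictly as soon as one coordinate differs.
-/

open Real Finset

/-- `z ↦ log (A z + s) - log z` is strictly decreasing on `(0, ∞)` for `A ≥ 0`, `s > 0`. -/
lemma log_affine_sub_log_lt {A s x y : ℝ} (hA : 0 ≤ A) (hs : 0 < s) (hx : 0 < x) (hxy : x < y) :
    Real.log (A * y + s) - Real.log y < Real.log (A * x + s) - Real.log x := by
  have hy : 0 < y := hx.trans hxy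
  have hAx : 0 < A * x + s := by positivity
  have hAy : 0 < A * y + s := by positivity
  rw [← Real.log_div hAy.ne' hy.ne', ← Real.log_div hAx.ne' hx.ne']
  apply Real.log_lt_log (by positivity)
  rw [div_lt_div_iff₀ hy hx]
  nlinarith [mul_lt_mul_of_pos_left hxy hs]

/-- The sum defining `F`, without its factor `1 / (2ℓ)`, truncated to the first `n` coordinates;
`v` is the initial variance `σ₁²` and `s` the noise variances. -/
noncomputable def partialRate (v : ℝ) (a s z : ℕ → ℝ) (n : ℕ) : ℝ :=
  Real.log (v / z 1) +
    ∑ k ∈ Finset.Icc 2 n, Real.log (((a (k - 1)) ^ 2 * z (k - 1) + s (k - 1)) / z k)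

/-- Adding `log z_n` cancels the only contribution of `z_n` to the partial rate, so the comparison
is strict as soon as some coordinate of index `< n` differs. -/
lemma partialRate_add_log_le {v : ℝ} (hv : 0 < v) {a s z d : ℕ → ℝ} {ℓ : ℕ}
    (hs : ∀ k, 1 ≤ k → k ≤ ℓ - 1 → 0 < s k)
    (hz : ∀ k, 1 ≤ k → k ≤ ℓ → 0 < z k)
    (hzd : ∀ k, 1 ≤ k → k ≤ ℓ → z k ≤ d k) (n : ℕ) (hn : 1 ≤ n) (hnℓ : n ≤ ℓ) :
    partialRate v a s d n + Real.log (d n) ≤ partialRate v a s z n + Real.log (z n) ∧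
    ((∃ k, 1 ≤ k ∧ k < n ∧ z k ≠ d k) →
      partialRate v a s d n + Real.log (d n) < partialRate v a s z n + Real.log (z n)) := by
  induction n, hn using Nat.le_induction with
  | base =>
    have h1 := hz 1 le_rfl hnℓ
    have h2 : 0 < d 1 := h1.trans_le (hzd 1 le_rfl hnℓ)
    refine ⟨?_, ?_⟩
    · simp [partialRate, Real.log_div hv.ne' h1.ne', Real.log_div hv.ne' h2.ne']
    · rintro ⟨k, hk, hk', -⟩
      omega
  | succ n hn ih =>
    obtain ⟨ih1, ih2⟩ := ih (by omega)
    have hsn := hs n hn (by omega)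
    have hzn := hz n hn (by omega)
    have hle := hzd n hn (by omega)
    have step : ∀ w : ℕ → ℝ, 0 < w n → 0 < w (n + 1) →
        partialRate v a s w (n + 1) + Real.log (w (n + 1)) =
          partialRate v a s w n + Real.log ((a n) ^ 2 * w n + s n) := by
      intro w hw hw'
      have hpos : 0 < (a n) ^ 2 * w n + s n := by positivity
      unfold partialRate
      rw [Finset.sum_Icc_succ_top (by omega), Nat.add_sub_cancel,
        Real.log_div hpos.ne' hw'.ne']
      ring
    have hz' := hz (n + 1) (by omega) hnℓ
    rw [step z hzn hz', step d (hzn.trans_le hle) (hz'.trans_le (hzd (n + 1) (by omega) hnℓ))]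
    rcases hle.eq_or_lt with heq | hlt
    · rw [heq] at ih1 ih2 ⊢
      refine ⟨by linarith, ?_⟩
      rintro ⟨k, hk, hk', hne⟩
      have hkn : k ≠ n := by
        rintro rfl
        exact hne heq
      linarith [ih2 ⟨k, hk, by omega, hne⟩]
    · have := log_affine_sub_log_lt (sq_nonneg (a n)) hsn hzn hlt
      exact ⟨by linarith, fun _ => by linarith⟩

/-- The effective distortions `d` form the greatest element of the feasible set `Z`, and the
function `F` attains its minimum over `Z` uniquely at `d`. Here sequences are indexed by
`ℕ`, with only indices `1,…,ℓ` relevant; `a k` and `σξsq k` stand for `a_k`, `σ_{ξ,k}²`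
(for `k = 1,…,ℓ−1`), `D k` for the distortion schedule and `σ1sq` for `σ₁²`. -/
theorem effective_distortions_minimize
    (ℓ : ℕ) (hℓ : 1 ≤ ℓ)
    (σ1sq : ℝ) (hσ1 : 0 < σ1sq)
    (a σξsq D : ℕ → ℝ)
    (hσξ : ∀ k, 1 ≤ k → k ≤ ℓ - 1 → 0 < σξsq k)
    (hD : ∀ k, 1 ≤ k → k ≤ ℓ → 0 < D k)
    (d : ℕ → ℝ)
    (hd1 : d 1 = min σ1sq (D 1))
    (hdk : ∀ k, 2 ≤ k → k ≤ ℓ →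
      d k = min ((a (k - 1)) ^ 2 * d (k - 1) + σξsq (k - 1)) (D k))
    (Z : Set (ℕ → ℝ))
    (hZ : Z = {z : ℕ → ℝ |
      (0 < z 1 ∧ z 1 ≤ min σ1sq (D 1)) ∧
      ∀ k, 2 ≤ k → k ≤ ℓ →
        0 < z k ∧ z k ≤ min ((a (k - 1)) ^ 2 * z (k - 1) + σξsq (k - 1)) (D k)})
    (F : (ℕ → ℝ) → ℝ)
    (hF : F = fun z => (1 / (2 * ℓ)) * Real.log (σ1sq / z 1)
      + (1 / (2 * ℓ)) * ∑ k ∈ Finset.Icc 2 ℓ,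
          Real.log (((a (k - 1)) ^ 2 * z (k - 1) + σξsq (k - 1)) / z k)) :
    (d ∈ Z ∧ ∀ z ∈ Z, ∀ k, 1 ≤ k → k ≤ ℓ → z k ≤ d k) ∧
    (∀ z ∈ Z, (∃ k, 1 ≤ k ∧ k ≤ ℓ ∧ z k ≠ d k) → F d < F z) := by
  subst hZ hF
  have hdpos : ∀ k, 1 ≤ k → k ≤ ℓ → 0 < d k := by
    intro k hk
    induction k, hk using Nat.le_induction with
    | base =>
      intro h
      rw [hd1]
      exact lt_min hσ1 (hD 1 le_rfl h)
    | succ n hn ih =>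
      intro h
      rw [hdk (n + 1) (by omega) h, Nat.add_sub_cancel]
      have h1 := ih (by omega)
      have h2 := hσξ n hn (by omega)
      exact lt_min (by positivity) (hD _ (by omega) h)
  have hgreatest : ∀ z ∈ {z : ℕ → ℝ |
      (0 < z 1 ∧ z 1 ≤ min σ1sq (D 1)) ∧
      ∀ k, 2 ≤ k → k ≤ ℓ →
        0 < z k ∧ z k ≤ min ((a (k - 1)) ^ 2 * z (k - 1) + σξsq (k - 1)) (D k)},
      ∀ k, 1 ≤ k → k ≤ ℓ → z k ≤ d k := by
    rintro z ⟨⟨-, hz1⟩, hzk⟩ k hk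
    induction k, hk using Nat.le_induction with
    | base =>
      intro _
      rw [hd1]
      exact hz1
    | succ n hn ih =>
      intro h
      have h1 := ih (by omega)
      refine (hzk (n + 1) (by omega) h).2.trans ?_
      rw [hdk (n + 1) (by omega) h, Nat.add_sub_cancel]
      gcongr
  refine ⟨⟨⟨⟨hdpos 1 le_rfl hℓ, hd1.le⟩, fun k hk hkℓ =>
    ⟨hdpos k (by omega) hkℓ, (hdk k hk hkℓ).le⟩⟩, hgreatest⟩, ?_⟩
  rintro z hz ⟨k, hk, hkℓ, hne⟩
  have hzd := hgreatest z hz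
  obtain ⟨⟨hz1, -⟩, hzk⟩ := hz
  have hzpos : ∀ k, 1 ≤ k → k ≤ ℓ → 0 < z k := by
    intro k hk hkℓ
    rcases hk.eq_or_lt with rfl | h
    · exact hz1
    · exact (hzk k h hkℓ).1
  obtain ⟨hle, hlt⟩ := partialRate_add_log_le hσ1 (a := a) hσξ hzpos hzd ℓ hℓ le_rfl
  have hlog : Real.log (z ℓ) ≤ Real.log (d ℓ) :=
    Real.log_le_log (hzpos ℓ hℓ le_rfl) (hzd ℓ hℓ le_rfl)
  have key : partialRate σ1sq a σξsq d ℓ < partialRate σ1sq a σξsq z ℓ := by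
    -- The last coordinate enters only through `-log z_ℓ`, the others through `hlt`.
    rcases hkℓ.eq_or_lt with rfl | hklt
    · have := Real.log_lt_log (hzpos k hk le_rfl) (lt_of_le_of_ne (hzd k hk le_rfl) hne)
      linarith
    · linarith [hlt ⟨k, hk, hklt, hne⟩]
  have hc : (0 : ℝ) < 1 / (2 * ℓ) := by
    have : (0 : ℝ) < ℓ := by exact_mod_cast hℓ
    positivity
  simp only [← mul_add]
  exact mul_lt_mul_of_pos_left key hc
end

section
/- Let S : (−π,π] → [0,∞) be integrable with variance σ² := (1/2π)∫_{−π}^{π} S(ω) dω > 0, and let 0 < D < σ². Then (1/4π)∫_{−π}^{π} log₂(1 + (σ² − D)·S(ω)/(σ² D)) dω ≤ (1/2) log₂(σ²/D), with equality if and only if S(ω) = σ² for almost every ω ∈ (−π,π]. -/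
/-!
Write `a = (σ² - D) / (σ² D)`, `Y = 1 + a S` and `m = σ² / D`, so that `m = 1 + a σ²` is the mean
of `Y`. The tangent-line form of Jensen's inequality for `log` uses the gap
`h = (Y / m - 1) - log (Y / m)`, which is nonnegative and vanishes exactly where `Y = m`, that is,
where `S = σ²`. Since `Y / m - 1` has zero mean, `∫ h = 2π log m - ∫ log Y`. Hence the inequality
is `0 ≤ ∫ h`, and equality means `h = 0` almost everywhere.
-/

open MeasureTheory Real Set

/-- For an integrable PSD `S : (−π,π] → [0,∞)` with variance `σ² > 0` and `0 < D < σ²`,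
`(1/4π)∫ log₂(1 + (σ²−D) S(ω)/(σ² D)) dω ≤ (1/2) log₂(σ²/D)`, with equality iff
`S(ω) = σ²` for a.e. `ω ∈ (−π,π]`. -/
theorem awgn_gap_bound
    (S : ℝ → ℝ) (hm : Measurable S)
    (hS0 : ∀ ω ∈ Ioc (-Real.pi) Real.pi, 0 ≤ S ω)
    (hint : IntegrableOn S (Ioc (-Real.pi) Real.pi))
    (σsq : ℝ) (hσ : σsq = (1 / (2 * Real.pi)) * ∫ ω in Ioc (-Real.pi) Real.pi, S ω)
    (hσpos : 0 < σsq)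
    (D : ℝ) (hD0 : 0 < D) (hDσ : D < σsq) :
    (1 / (4 * Real.pi)) * ∫ ω in Ioc (-Real.pi) Real.pi,
        Real.logb 2 (1 + (σsq - D) * S ω / (σsq * D)) ≤ (1 / 2) * Real.logb 2 (σsq / D) ∧
    ((1 / (4 * Real.pi)) * ∫ ω in Ioc (-Real.pi) Real.pi,
        Real.logb 2 (1 + (σsq - D) * S ω / (σsq * D)) = (1 / 2) * Real.logb 2 (σsq / D) ↔
      S =ᵐ[volume.restrict (Ioc (-Real.pi) Real.pi)] fun _ => σsq) := by
  have hπ := Real.pi_pos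
  have hl2 : 0 < Real.log 2 := Real.log_pos (by norm_num)
  set μ := volume.restrict (Ioc (-Real.pi) Real.pi) with hμ
  set a := (σsq - D) / (σsq * D) with ha
  have ha0 : 0 < a := div_pos (by linarith) (by positivity)
  set m := σsq / D with hmdef
  have hm0 : 0 < m := by positivity
  have hma : m = 1 + a * σsq := by
    rw [hmdef, ha]; field_simp; ring
  have hSI : ∫ ω, S ω ∂μ = 2 * Real.pi * σsq := by
    rw [hσ]; field_simp
  have hS0' : ∀ᵐ ω ∂μ, 0 ≤ S ω := (ae_restrict_iff' measurableSet_Ioc).2 (ae_of_all _ hS0)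
  have hint' : Integrable S μ := hint
  have hlog : Integrable (fun ω => Real.log (1 + a * S ω)) μ := by
    -- `log Y` is integrable because `0 ≤ log (1 + a S) ≤ a S`.
    refine (hint'.const_mul a).mono'
      (((hm.const_mul a).const_add 1).log.aestronglyMeasurable) ?_
    filter_upwards [hS0'] with ω h
    have : 0 ≤ a * S ω := by positivity
    rw [Real.norm_of_nonneg (Real.log_nonneg (by linarith))]
    linarith [Real.log_le_sub_one_of_pos (show 0 < 1 + a * S ω by linarith)]
  set h : ℝ → ℝ := fun ω => (a / m) * (S ω - σsq) + Real.log m - Real.log (1 + a * S ω) with hh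
  have hform : ∀ ω, 0 ≤ S ω → h ω = ((1 + a * S ω) / m - 1) - Real.log ((1 + a * S ω) / m) := by
    intro ω hω
    have : 0 ≤ a * S ω := by positivity
    have e : (1 + a * S ω) / m - 1 = (a / m) * (S ω - σsq) := by
      field_simp; rw [hma]; ring
    rw [Real.log_div (by linarith) hm0.ne', e]; simp only [hh]; ring
  have hhi : Integrable h μ :=
    (((hint'.sub (integrable_const _)).const_mul _).add (integrable_const _)).sub hlog
  have hh0 : 0 ≤ᵐ[μ] h := by
    filter_upwards [hS0'] with ω hω
    have : 0 ≤ a * S ω := by positivity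
    have := Real.log_le_sub_one_of_pos (show 0 < (1 + a * S ω) / m by positivity)
    simp only [Pi.zero_apply]
    rw [hform ω hω]; linarith
  have hvol : μ.real univ = 2 * Real.pi := by
    rw [hμ, measureReal_restrict_apply_univ, Real.volume_real_Ioc_of_le (by linarith)]; ring
  have hhI : ∫ ω, h ω ∂μ = 2 * Real.pi * Real.log m - ∫ ω, Real.log (1 + a * S ω) ∂μ := by
    simp only [hh]
    have i1 : Integrable (fun ω => (a / m) * (S ω - σsq)) μ :=
      (hint'.sub (integrable_const _)).const_mul _
    have i2 : Integrable (fun ω => (a / m) * (S ω - σsq) + Real.log m) μ :=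
      i1.add (integrable_const _)
    rw [integral_sub i2 hlog, integral_add i1 (integrable_const _),
      integral_const_mul, integral_sub hint' (integrable_const _), hSI]
    simp only [integral_const, hvol, smul_eq_mul]
    ring
  have hLHS : (1 / (4 * Real.pi)) * ∫ ω, Real.logb 2 (1 + (σsq - D) * S ω / (σsq * D)) ∂μ
      = (1 / 2) * Real.logb 2 m - (1 / (4 * Real.pi * Real.log 2)) * ∫ ω, h ω ∂μ := by
    have e : ∀ ω, Real.logb 2 (1 + (σsq - D) * S ω / (σsq * D))
        = Real.log (1 + a * S ω) / Real.log 2 := by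
      intro ω; rw [Real.logb, ha, div_mul_eq_mul_div]
    simp only [e]
    rw [integral_div, hhI, Real.logb]
    field_simp
    ring
  have hc : 0 < 1 / (4 * Real.pi * Real.log 2) := by positivity
  rw [hLHS]
  refine ⟨?_, ?_⟩
  · have := mul_nonneg hc.le (integral_nonneg_of_ae hh0)
    linarith
  · rw [sub_eq_self, mul_eq_zero, or_iff_right hc.ne', integral_eq_zero_iff_of_nonneg_ae hh0 hhi]
    constructor
    · intro hz
      filter_upwards [hz, hS0'] with ω hz hω
      have hp : 0 ≤ a * S ω := by positivity
      rw [hform ω hω, Pi.zero_apply] at hz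
      -- Strictness of `log t < t - 1` away from `t = 1` forces `Y = m`.
      have h1 : (1 + a * S ω) / m = 1 := by
        by_contra hne
        have := Real.log_lt_sub_one_of_pos (show 0 < (1 + a * S ω) / m by positivity) hne
        linarith
      rw [div_eq_one_iff_eq hm0.ne', hma] at h1
      exact mul_left_cancel₀ ha0.ne' (by linarith)
    · intro hz
      filter_upwards [hz] with ω hz
      simp only [hh, hz, Pi.zero_apply, ← hma]
      ring
end

section
/- Let S : (−π,π] → (0,∞) be integrable with ∫_{−π}^{π} |ln S(ω)| dω < ∞, and let θ > 0. Set D_θ := (1/2π)∫_{−π}^{π} min{θ, S(ω)} dω. Then (1/4π)∫_{−π}^{π} max{0, log₂(S(ω)/θ)} dω ≥ (1/4π)∫_{−π}^{π} log₂(S(ω)/D_θ) dω. -/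
open MeasureTheory Real Set

/-! Write `m = min θ S`. Pointwise `max 0 (log (S / θ)) = log (S / m)`, so the difference of the
two integrands is `log (S / Dθ) - log (S / m) = log (m / Dθ) ≤ m / Dθ - 1`, and the right-hand side
integrates to zero because `Dθ` is the mean of `m` over an interval of length `2π`. This is
Jensen's inequality for the logarithm, in its tangent-line form. -/

/-- The tangent-line bound behind the theorem, at a single frequency with `s = S ω`, `d = Dθ`. -/
lemma logb_div_le_max_add {s θ d : ℝ} (hs : 0 < s) (hθ : 0 < θ) (hd : 0 < d) :
    Real.logb 2 (s / d) ≤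
      max 0 (Real.logb 2 (s / θ)) + (min θ s / d - 1) / Real.log 2 := by
  have h2 : 0 < Real.log 2 := Real.log_pos one_lt_two
  have hmin : 0 < min θ s := lt_min hθ hs
  have hsplit : Real.logb 2 (s / d) =
      Real.logb 2 (s / min θ s) + Real.logb 2 (min θ s / d) := by
    rw [← Real.logb_mul (by positivity) (by positivity)]
    congr 1
    field_simp
  have hmax : Real.logb 2 (s / min θ s) ≤ max 0 (Real.logb 2 (s / θ)) := by
    rcases le_total θ s with h | h
    · rw [min_eq_left h]
      exact le_max_right _ _
    · rw [min_eq_right h, div_self hs.ne', Real.logb_one]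
      exact le_max_left _ _
  have htangent : Real.logb 2 (min θ s / d) ≤ (min θ s / d - 1) / Real.log 2 := by
    rw [Real.logb]
    gcongr
    exact Real.log_le_sub_one_of_pos (by positivity)
  linarith

/-- For a strictly positive integrable PSD `S` with `∫ |ln S| < ∞` and a water level `θ > 0`
with associated distortion `D_θ = (1/2π)∫ min{θ, S(ω)} dω`, the reverse water-filling rate
dominates: `(1/4π)∫ max{0, log₂(S(ω)/θ)} dω ≥ (1/4π)∫ log₂(S(ω)/D_θ) dω`. -/
theorem waterfilling_rate_ge
    (S : ℝ → ℝ) (hm : Measurable S)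
    (hS0 : ∀ ω ∈ Ioc (-Real.pi) Real.pi, 0 < S ω)
    (hint : IntegrableOn S (Ioc (-Real.pi) Real.pi))
    (hlog : IntegrableOn (fun ω => |Real.log (S ω)|) (Ioc (-Real.pi) Real.pi))
    (θ : ℝ) (hθ : 0 < θ)
    (Dθ : ℝ) (hDθ : Dθ = (1 / (2 * Real.pi)) * ∫ ω in Ioc (-Real.pi) Real.pi, min θ (S ω)) :
    (1 / (4 * Real.pi)) * ∫ ω in Ioc (-Real.pi) Real.pi, Real.logb 2 (S ω / Dθ) ≤
      (1 / (4 * Real.pi)) * ∫ ω in Ioc (-Real.pi) Real.pi,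
        max 0 (Real.logb 2 (S ω / θ)) := by
  have hpi := Real.pi_pos
  have h2 : 0 < Real.log 2 := Real.log_pos one_lt_two
  have hconst (c : ℝ) : IntegrableOn (fun _ => c) (Ioc (-Real.pi) Real.pi) :=
    integrableOn_const (by simp)
  have hvol : volume.real (Ioc (-Real.pi) Real.pi) = 2 * Real.pi := by
    rw [Real.volume_real_Ioc_of_le (by linarith)]
    ring
  have hminInt : IntegrableOn (fun ω => min θ (S ω)) (Ioc (-Real.pi) Real.pi) :=
    (hconst θ).inf hint
  have hminPos : 0 < ∫ ω in Ioc (-Real.pi) Real.pi, min θ (S ω) := by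
    rw [← intervalIntegral.integral_of_le (by linarith)]
    refine intervalIntegral.intervalIntegral_pos_of_pos_on
      ((intervalIntegrable_iff_integrableOn_Ioc_of_le (by linarith)).2 hminInt) ?_ (by linarith)
    exact fun ω hω => lt_min hθ (hS0 ω (Ioo_subset_Ioc_self hω))
  have hD : 0 < Dθ := by
    rw [hDθ]
    positivity
  have hlogInt : IntegrableOn (fun ω => Real.log (S ω)) (Ioc (-Real.pi) Real.pi) :=
    (integrable_norm_iff (Real.measurable_log.comp hm).aestronglyMeasurable).1 hlog
  have hlogbInt {c : ℝ} (hc : 0 < c) :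
      IntegrableOn (fun ω => Real.logb 2 (S ω / c)) (Ioc (-Real.pi) Real.pi) := by
    refine IntegrableOn.congr_fun ((hlogInt.sub (hconst (Real.log c))).div_const (Real.log 2))
      (fun ω hω => ?_) measurableSet_Ioc
    simp [Real.logb, Real.log_div (hS0 ω hω).ne' hc.ne']
  have hmaxInt : IntegrableOn (fun ω => max 0 (Real.logb 2 (S ω / θ)))
      (Ioc (-Real.pi) Real.pi) :=
    (hconst 0).sup (hlogbInt hθ)
  have htanInt : IntegrableOn (fun ω => (min θ (S ω) / Dθ - 1) / Real.log 2)
      (Ioc (-Real.pi) Real.pi) :=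
    ((hminInt.div_const Dθ).sub (hconst 1)).div_const _
  have htanZero :
      ∫ ω in Ioc (-Real.pi) Real.pi, (min θ (S ω) / Dθ - 1) / Real.log 2 = 0 := by
    have hmean : ∫ ω in Ioc (-Real.pi) Real.pi, min θ (S ω) = 2 * Real.pi * Dθ := by
      rw [hDθ]
      field_simp
    rw [integral_div, integral_sub (hminInt.div_const Dθ) (hconst 1), integral_div, hmean,
      setIntegral_const, hvol]
    field_simp
    simp
  refine mul_le_mul_of_nonneg_left ?_ (by positivity)
  calc ∫ ω in Ioc (-Real.pi) Real.pi, Real.logb 2 (S ω / Dθ)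
      ≤ ∫ ω in Ioc (-Real.pi) Real.pi, (max 0 (Real.logb 2 (S ω / θ)) +
          (min θ (S ω) / Dθ - 1) / Real.log 2) :=
        setIntegral_mono_on (hlogbInt hD) (hmaxInt.add htanInt) measurableSet_Ioc
          fun ω hω => logb_div_le_max_add (hS0 ω hω) hθ hD
    _ = ∫ ω in Ioc (-Real.pi) Real.pi, max 0 (Real.logb 2 (S ω / θ)) := by
        rw [integral_add hmaxInt htanInt, htanZero, add_zero]
end

section
/- Let S : (−π,π] → [0,∞) be integrable, σ² := (1/2π)∫_{−π}^{π} S(ω) dω, and let 0 < D < σ². Suppose θ > 0 satisfies D = (1/2π)∫_{−π}^{π} min{θ, S(ω)} dω, and set R(D) := (1/4π)∫_{−π}^{π} max{0, log₂(S(ω)/θ)} dω. Let ε ∈ [0, D] be such that ς := (1/2π)∫_{−π}^{π} dω / max{ε, S(ω)} < ∞. Then (1/4π)∫_{−π}^{π} log₂(1 + (1 − D/σ²)·S(ω)/D) dω − R(D) ≤ (1/2) log₂( (D+ε)·ς + (1 − D/σ²)·(D+ε)/D ). -/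
/-!
Write `E` for the normalised mean `(1/2π)∫` over `(-π, π]`, `a = 1 - D/σ²`, `s = max ε S`,
`m = min θ s` and `D' = E m`. As a mean of `min θ S`, `D` is at most `θ`, so `ε ≤ θ`; raising `S`
to `s` then leaves the water-filling rate unchanged and only increases the first logarithm. Since
`1 / max 1 (s/θ) = m/s`, the integrand of the difference is at most `log (m/s + a m/D)`, and Jensen's
inequality bounds its mean by `log (E[m/s] + a D'/D)`. As `m` increases and `1/s` decreases with `s`,
Chebyshev's association inequality gives `E[m/s] ≤ D' E[1/s] = D' ς`. Finally `D' ≤ D + ε`.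

Both inequalities are used in tangent form, so that a single pointwise estimate
(`pointwise_log_bound`) is integrated: Jensen as `log x ≤ log c + x/c - 1`, and Chebyshev as
`(m - D') (1/s - 1/D') ≤ 0`, valid pointwise because `D' ≤ θ`.
-/

open MeasureTheory Real Set ENNReal

/-- Pointwise form of Chebyshev's association inequality for `min θ s` and `1/s`, expanded
around the level `d`. -/
lemma min_div_le {s θ d : ℝ} (hs : 0 < s) (hd : 0 < d) (hdθ : d ≤ θ) :
    min θ s / s ≤ d * s⁻¹ + min θ s / d - 1 := by
  have h : (min θ s - d) * (s - d) ≥ 0 := by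
    rcases le_total θ s with h | h
    · rw [min_eq_left h]; exact mul_nonneg (by linarith) (by linarith)
    · rw [min_eq_right h]; exact mul_self_nonneg _
  have e : d * s⁻¹ + min θ s / d - 1 - min θ s / s = (min θ s - d) * (s - d) / (s * d) := by
    field_simp
    ring
  have : 0 ≤ (min θ s - d) * (s - d) / (s * d) := by positivity
  linarith

/-- The estimate that is integrated: `d` is the expansion point of the association inequality
(the mean of `min θ s`) and `c` that of the tangent line to the logarithm. -/
lemma pointwise_log_bound {x ε θ d D a c : ℝ} (hx : 0 ≤ x) (hs : 0 < max ε x) (hεθ : ε ≤ θ)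
    (hθ : 0 < θ) (hd : 0 < d) (hdθ : d ≤ θ) (hD : 0 < D) (ha : 0 ≤ a) (hc : 0 < c) :
    Real.log (1 + a * x / D) - max 0 (Real.log (x / θ)) ≤
      (Real.log c - 1 - 1 / c) + (d / c) * (max ε x)⁻¹ +
        ((1 / d + a / D) / c) * min θ (max ε x) := by
  set s := max ε x with hsdef
  have hxs : x ≤ s := le_max_right _ _
  set m := min θ s with hmdef
  have hm : 0 < m := lt_min hθ hs
  have h1 : Real.log (1 + a * x / D) ≤ Real.log (1 + a * s / D) := by
    apply Real.log_le_log (by positivity)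
    gcongr
  have h2 : Real.log (s / m) ≤ max 0 (Real.log (x / θ)) := by
    rcases le_total s θ with h | h
    · rw [hmdef, min_eq_right h, div_self hs.ne', Real.log_one]
      exact le_max_left _ _
    · rw [hmdef, min_eq_left h]
      rcases le_total ε x with h' | h'
      · rw [hsdef, max_eq_right h']; exact le_max_right _ _
      · have : s = θ := le_antisymm (by rw [hsdef, max_eq_left h']; exact hεθ) h
        rw [this, div_self hθ.ne', Real.log_one]
        exact le_max_left _ _
  set X := m / s + a * m / D with hX
  have hXpos : 0 < X := by positivity
  have h3 : Real.log (1 + a * s / D) - Real.log (s / m) = Real.log X := by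
    rw [← Real.log_div (by positivity) (by positivity)]
    congr 1
    rw [hX]
    field_simp
  have h4 : Real.log X ≤ Real.log c + X / c - 1 := by
    have := Real.log_le_sub_one_of_pos (div_pos hXpos hc)
    rw [Real.log_div hXpos.ne' hc.ne'] at this
    linarith
  have h5 : X / c ≤ (d * s⁻¹ + m / d - 1 + a * m / D) / c := by
    have := min_div_le hs hd hdθ
    gcongr
    linarith
  have h6 : (d * s⁻¹ + m / d - 1 + a * m / D) / c
      = - (1 / c) + (d / c) * s⁻¹ + ((1 / d + a / D) / c) * m := by
    field_simp
    ring
  linarith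

/-- Closed-form bound `B₃`: for an integrable PSD `S` with variance `σ²`, distortion
`0 < D < σ²` realized by the water level `θ` with reverse water-filling rate `R(D)`, and any
`ε ∈ [0, D]` for which `ς = (1/2π)∫ dω / max{ε, S(ω)} < ∞`,
`(1/4π)∫ log₂(1 + (1 − D/σ²) S(ω)/D) dω − R(D) ≤ (1/2) log₂((D+ε) ς + (1 − D/σ²)(D+ε)/D)`. -/
theorem closed_form_bound_B3
    (S : ℝ → ℝ) (hm : Measurable S)
    (hS0 : ∀ ω ∈ Ioc (-Real.pi) Real.pi, 0 ≤ S ω)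
    (hint : IntegrableOn S (Ioc (-Real.pi) Real.pi))
    (σsq : ℝ) (hσ : σsq = (1 / (2 * Real.pi)) * ∫ ω in Ioc (-Real.pi) Real.pi, S ω)
    (D : ℝ) (hD0 : 0 < D) (hDσ : D < σsq)
    (θ : ℝ) (hθ : 0 < θ)
    (hDθ : D = (1 / (2 * Real.pi)) * ∫ ω in Ioc (-Real.pi) Real.pi, min θ (S ω))
    (R : ℝ)
    (hR : R = (1 / (4 * Real.pi)) * ∫ ω in Ioc (-Real.pi) Real.pi,
      max 0 (Real.logb 2 (S ω / θ)))
    (ε : ℝ) (hε0 : 0 ≤ ε) (hεD : ε ≤ D)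
    (hfin : (∫⁻ ω in Ioc (-Real.pi) Real.pi, (ENNReal.ofReal (max ε (S ω)))⁻¹) < ⊤)
    (ς : ℝ)
    (hς : ς = (1 / (2 * Real.pi)) *
      (∫⁻ ω in Ioc (-Real.pi) Real.pi, (ENNReal.ofReal (max ε (S ω)))⁻¹).toReal) :
    (1 / (4 * Real.pi)) * (∫ ω in Ioc (-Real.pi) Real.pi,
        Real.logb 2 (1 + (1 - D / σsq) * S ω / D)) - R ≤
      (1 / 2) * Real.logb 2 ((D + ε) * ς + (1 - D / σsq) * (D + ε) / D) := by
  have hπ := Real.pi_pos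
  set μ := (volume : Measure ℝ).restrict (Ioc (-Real.pi) Real.pi) with hμ
  have hconst : ∀ k : ℝ, ∫ _, k ∂μ = 2 * Real.pi * k := by
    intro k
    rw [integral_const, hμ, measureReal_restrict_apply_univ, Real.volume_real_Ioc_of_le (by linarith),
      smul_eq_mul]
    ring
  have hS : Integrable S μ := hint
  have hnn : ∀ᵐ ω ∂μ, 0 ≤ S ω := (ae_restrict_iff' measurableSet_Ioc).2 (.of_forall hS0)
  have hσ0 : 0 < σsq := hD0.trans hDσ
  set a := 1 - D / σsq with ha
  have ha0 : 0 < a := by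
    rw [ha, sub_pos, div_lt_one hσ0]
    exact hDσ
  have hs_meas : Measurable (fun ω => max ε (S ω)) := measurable_const.max hm
  -- Finiteness of the inverse moment excludes a non-negligible zero set when `ε = 0`.
  have hpos : ∀ᵐ ω ∂μ, 0 < max ε (S ω) := by
    filter_upwards [ae_lt_top (hs_meas.ennreal_ofReal.inv) hfin.ne] with ω hω
    exact ENNReal.ofReal_pos.1 (ENNReal.inv_lt_top.1 hω)
  have hinv_eq : ∀ᵐ ω ∂μ, (ENNReal.ofReal (max ε (S ω)))⁻¹ = ENNReal.ofReal (max ε (S ω))⁻¹ := by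
    filter_upwards [hpos] with ω hω
    rw [ENNReal.ofReal_inv_of_pos hω]
  have hinv_nn : 0 ≤ᵐ[μ] fun ω => (max ε (S ω))⁻¹ := by
    filter_upwards [hpos] with ω hω
    exact (inv_pos.2 hω).le
  rw [lintegral_congr_ae hinv_eq] at hfin hς
  have hinv : Integrable (fun ω => (max ε (S ω))⁻¹) μ :=
    (lintegral_ofReal_ne_top_iff_integrable hs_meas.inv.aestronglyMeasurable hinv_nn).1 hfin.ne
  rw [← integral_eq_lintegral_of_nonneg_ae hinv_nn hs_meas.inv.aestronglyMeasurable] at hς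
  have hmin : Integrable (fun ω => min θ (S ω)) μ := (integrable_const θ).inf hS
  have hm' : Integrable (fun ω => min θ (max ε (S ω))) μ :=
    (integrable_const θ).inf ((integrable_const ε).sup hS)
  have hDθ' : 2 * Real.pi * D = ∫ ω, min θ (S ω) ∂μ := by
    rw [hDθ]; field_simp
  have hDle : D ≤ θ := by
    have := integral_mono hmin (integrable_const θ) (fun ω => min_le_left _ _)
    rw [hconst, ← hDθ'] at this
    exact le_of_mul_le_mul_left this (by positivity)
  obtain ⟨d, hd⟩ : ∃ d, 2 * Real.pi * d = ∫ ω, min θ (max ε (S ω)) ∂μ :=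
    ⟨(∫ ω, min θ (max ε (S ω)) ∂μ) / (2 * Real.pi), by field_simp⟩
  have hdθ : d ≤ θ := by
    have := integral_mono hm' (integrable_const θ) (fun ω => min_le_left _ _)
    rw [hconst, ← hd] at this
    exact le_of_mul_le_mul_left this (by positivity)
  have hDd : D ≤ d := by
    have := integral_mono hmin hm' (fun ω => min_le_min_left θ (le_max_right ε (S ω)))
    rw [← hDθ', ← hd] at this
    exact le_of_mul_le_mul_left this (by positivity)
  have hdD : d ≤ D + ε := by
    have : ∫ ω, min θ (max ε (S ω)) ∂μ ≤ ∫ ω, (min θ (S ω) + ε) ∂μ := by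
      apply integral_mono_ae hm' (hmin.add (integrable_const ε))
      filter_upwards [hnn] with ω hω
      simp only [Pi.add_apply, min_def, max_def]
      split_ifs <;> linarith
    rw [integral_add hmin (integrable_const ε), hconst, ← hd, ← hDθ', ← mul_add] at this
    exact le_of_mul_le_mul_left this (by positivity)
  have hd0 : 0 < d := hD0.trans_le hDd
  have hς' : 2 * Real.pi * ς = ∫ ω, (max ε (S ω))⁻¹ ∂μ := by
    rw [hς]; field_simp
  have hς0 : 0 ≤ ς := by
    rw [hς]
    exact mul_nonneg (by positivity) (integral_nonneg_of_ae hinv_nn)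
  set c := d * ς + a * d / D with hc
  have hc0 : 0 < c := by positivity
  have hlog1 : Integrable (fun ω => Real.log (1 + a * S ω / D)) μ := by
    refine ((hS.const_mul a).div_const D).mono'
      (show Measurable _ by fun_prop).aestronglyMeasurable ?_
    filter_upwards [hnn] with ω hω
    have h0 : 0 ≤ a * S ω / D := by positivity
    rw [Real.norm_of_nonneg (Real.log_nonneg (by linarith))]
    have := Real.log_le_sub_one_of_pos (show 0 < 1 + a * S ω / D by linarith)
    linarith
  have hlog2 : Integrable (fun ω => max 0 (Real.log (S ω / θ))) μ := by
    refine (hS.div_const θ).mono' (show Measurable _ by fun_prop).aestronglyMeasurable ?_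
    filter_upwards [hnn] with ω hω
    rw [Real.norm_of_nonneg (le_max_left _ _)]
    have h0 : 0 ≤ S ω / θ := by positivity
    exact max_le h0 (Real.log_le_self h0)
  have key : ∫ ω, Real.log (1 + a * S ω / D) ∂μ - ∫ ω, max 0 (Real.log (S ω / θ)) ∂μ
      ≤ 2 * Real.pi * Real.log c := by
    rw [← integral_sub hlog1 hlog2]
    have hI1 : Integrable (fun ω => (Real.log c - 1 - 1 / c) + (d / c) * (max ε (S ω))⁻¹) μ :=
      (integrable_const _).add (hinv.const_mul (d / c))
    have hI2 := hm'.const_mul ((1 / d + a / D) / c)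
    calc ∫ ω, (Real.log (1 + a * S ω / D) - max 0 (Real.log (S ω / θ))) ∂μ
        ≤ ∫ ω, ((Real.log c - 1 - 1 / c) + (d / c) * (max ε (S ω))⁻¹ +
            ((1 / d + a / D) / c) * min θ (max ε (S ω))) ∂μ := by
          apply integral_mono_ae (hlog1.sub hlog2) (hI1.add hI2)
          filter_upwards [hnn, hpos] with ω h1 h2
          exact pointwise_log_bound h1 h2 (hεD.trans hDle) hθ hd0 hdθ hD0 ha0.le hc0
      _ = 2 * Real.pi * (Real.log c - 1 - 1 / c) + (d / c) * (2 * Real.pi * ς) +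
            ((1 / d + a / D) / c) * (2 * Real.pi * d) := by
          rw [integral_add hI1 hI2, integral_add (integrable_const _) (hinv.const_mul (d / c)),
            hconst, integral_const_mul, integral_const_mul, ← hd, ← hς']
      _ = 2 * Real.pi * (Real.log c - 1 + (d * ς + a * d / D) / c) := by
          field_simp
          ring
      _ = 2 * Real.pi * Real.log c := by
          rw [← hc, div_self hc0.ne']; ring
  have hcle : Real.log c ≤ Real.log ((D + ε) * ς + a * (D + ε) / D) := by
    apply Real.log_le_log hc0
    rw [hc]
    gcongr
  have hl2 : 0 < Real.log 2 := Real.log_pos one_lt_two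
  have e1 : ∫ ω, Real.logb 2 (1 + a * S ω / D) ∂μ
      = (∫ ω, Real.log (1 + a * S ω / D) ∂μ) / Real.log 2 := by
    simp only [Real.logb, integral_div]
  have e2 : ∫ ω, max 0 (Real.logb 2 (S ω / θ)) ∂μ
      = (∫ ω, max 0 (Real.log (S ω / θ)) ∂μ) / Real.log 2 := by
    rw [← integral_div]
    congr 1 with ω
    rw [Real.logb, ← max_div_div_right hl2.le, zero_div]
  rw [hR, e1, e2, Real.logb]
  calc _ = (∫ ω, Real.log (1 + a * S ω / D) ∂μ - ∫ ω, max 0 (Real.log (S ω / θ)) ∂μ)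
          / (4 * Real.pi * Real.log 2) := by field_simp
    _ ≤ (2 * Real.pi * Real.log ((D + ε) * ς + a * (D + ε) / D)) / (4 * Real.pi * Real.log 2) := by
        gcongr
        exact key.trans (by gcongr)
    _ = _ := by field_simp; ring
end

section
/- Let S : (−π,π] → [0,∞) be integrable, σ² := (1/2π)∫_{−π}^{π} S(ω) dω, let 0 < D < σ², and let θ > 0 satisfy D = (1/2π)∫_{−π}^{π} min{θ, S(ω)} dω; set R(D) := (1/4π)∫_{−π}^{π} max{0, log₂(S(ω)/θ)} dω. Then (1/4π)∫_{−π}^{π} log₂(1 + (1 − D/σ²)·S(ω)/D) dω − R(D) < (1/2) log₂(σ²/D). -/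
open MeasureTheory Real Set

/-!
Write `c = σ²/D > 1` and `a = (1 - D/σ²)/D`, so that `a D = 1 - 1/c`. Since
`s / max (s/θ) 1 = min θ s`, one has `(1 + a s) / max (s/θ) 1 ≤ 1 + a min θ s`. Combined with the
tangent line bound `log u ≤ u/c - 1 + log c` at `u = c`, this gives the pointwise inequality
`log (1 + a s) ≤ max 0 (log (s/θ)) + ((1 + a min θ s)/c - 1 + log c)` (`log_one_add_mul_le`).
Averaging over the frequency, `min θ S` has mean `D`, so the last bracket has mean
`(2 - 1/c)/c - 1 + log c = log c - (1 - 1/c)²`, which is strictly below `log c`.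
-/

/-- Tangent line bound for `log` at `c`. -/
lemma log_le_tangent {u c : ℝ} (hu : 0 < u) (hc : 0 < c) :
    Real.log u ≤ u / c - 1 + Real.log c := by
  have h := Real.log_le_sub_one_of_pos (div_pos hu hc)
  rw [Real.log_div hu.ne' hc.ne'] at h
  linarith

lemma log_one_add_mul_le {s θ a c : ℝ} (hs : 0 ≤ s) (hθ : 0 < θ) (ha : 0 ≤ a) (hc : 0 < c) :
    Real.log (1 + a * s) ≤
      max 0 (Real.log (s / θ)) + ((1 + a * min θ s) / c - 1 + Real.log c) := by
  rcases le_total s θ with h | h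
  · rw [min_eq_right h]
    have := log_le_tangent (u := 1 + a * s) (by positivity) hc
    have := le_max_left 0 (Real.log (s / θ))
    linarith
  · rw [min_eq_left h]
    have hs' : 0 < s := hθ.trans_le h
    have h1 : 1 + a * s ≤ s / θ * (1 + a * θ) := by
      have : s / θ * (1 + a * θ) = s / θ + a * s := by field_simp
      rw [this]
      have := (one_le_div hθ).2 h
      linarith
    have h2 := Real.log_le_log (by positivity) h1
    rw [Real.log_mul (by positivity) (by positivity)] at h2
    have := log_le_tangent (u := 1 + a * θ) (by positivity) hc
    have := le_max_right 0 (Real.log (s / θ))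
    linarith

/-- Closed-form bound `B₄`: for an integrable PSD `S` with variance `σ²`, distortion
`0 < D < σ²` realized by the water level `θ > 0`, and reverse water-filling rate `R(D)`,
`(1/4π)∫ log₂(1 + (1 − D/σ²) S(ω)/D) dω − R(D) < (1/2) log₂(σ²/D)`. -/
theorem closed_form_bound_B4
    (S : ℝ → ℝ) (hm : Measurable S)
    (hS0 : ∀ ω ∈ Ioc (-Real.pi) Real.pi, 0 ≤ S ω)
    (hint : IntegrableOn S (Ioc (-Real.pi) Real.pi))
    (σsq : ℝ) (hσ : σsq = (1 / (2 * Real.pi)) * ∫ ω in Ioc (-Real.pi) Real.pi, S ω)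
    (D : ℝ) (hD0 : 0 < D) (hDσ : D < σsq)
    (θ : ℝ) (hθ : 0 < θ)
    (hDθ : D = (1 / (2 * Real.pi)) * ∫ ω in Ioc (-Real.pi) Real.pi, min θ (S ω))
    (R : ℝ)
    (hR : R = (1 / (4 * Real.pi)) * ∫ ω in Ioc (-Real.pi) Real.pi,
      max 0 (Real.logb 2 (S ω / θ))) :
    (1 / (4 * Real.pi)) * (∫ ω in Ioc (-Real.pi) Real.pi,
        Real.logb 2 (1 + (1 - D / σsq) * S ω / D)) - R <
      (1 / 2) * Real.logb 2 (σsq / D) := by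
  set I := Ioc (-Real.pi) Real.pi with hI
  have hpi := Real.pi_pos
  have hσ0 : 0 < σsq := hD0.trans hDσ
  have hl2 : 0 < Real.log 2 := Real.log_pos one_lt_two
  obtain ⟨c, hc⟩ : ∃ c, c = σsq / D := ⟨_, rfl⟩
  obtain ⟨a, ha⟩ : ∃ a, a = (1 - D / σsq) / D := ⟨_, rfl⟩
  have hc1 : 1 < c := by rw [hc]; exact (one_lt_div hD0).2 hDσ
  have hc0 : 0 < c := by linarith
  have ha0 : 0 ≤ a := by
    rw [ha]
    exact div_nonneg (sub_nonneg.2 ((div_lt_one hσ0).2 hDσ).le) hD0.le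
  have haD : a * D = 1 - 1 / c := by rw [ha, hc]; field_simp
  have e1 : ∀ ω, Real.logb 2 (1 + (1 - D / σsq) * S ω / D)
      = Real.log (1 + a * S ω) / Real.log 2 := by
    intro ω
    rw [Real.logb, ha, div_mul_eq_mul_div]
  have e2 : ∀ ω, max 0 (Real.logb 2 (S ω / θ))
      = max 0 (Real.log (S ω / θ)) / Real.log 2 := by
    intro ω
    rw [Real.logb, max_div_div_right hl2.le 0 (Real.log (S ω / θ)) |>.symm, zero_div]
  simp_rw [e2] at hR
  simp_rw [e1]
  rw [hR, integral_div, integral_div, ← hc, Real.logb]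
  have hmem : ∀ᵐ ω ∂(volume.restrict I), ω ∈ I := ae_restrict_mem measurableSet_Ioc
  have i1 : IntegrableOn (fun ω => Real.log (1 + a * S ω)) I := by
    refine Integrable.mono' (hint.const_mul a)
      (Measurable.log (by fun_prop)).aestronglyMeasurable ?_
    filter_upwards [hmem] with ω hω
    have h := mul_nonneg ha0 (hS0 ω hω)
    rw [Real.norm_of_nonneg (Real.log_nonneg (by linarith))]
    have := Real.log_le_sub_one_of_pos (show 0 < 1 + a * S ω by linarith)
    linarith
  have i2 : IntegrableOn (fun ω => max 0 (Real.log (S ω / θ))) I := by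
    refine Integrable.mono' (hint.div_const θ)
      (measurable_const.max (Measurable.log (by fun_prop))).aestronglyMeasurable ?_
    filter_upwards [hmem] with ω hω
    have h := div_nonneg (hS0 ω hω) hθ.le
    rw [Real.norm_of_nonneg (le_max_left _ _)]
    exact max_le h (Real.log_le_self h)
  have i3 : IntegrableOn (fun ω => min θ (S ω)) I := by
    refine Integrable.mono' hint (by fun_prop) ?_
    filter_upwards [hmem] with ω hω
    rw [Real.norm_of_nonneg (le_min hθ.le (hS0 ω hω))]
    exact min_le_right _ _
  have ic : ∀ k : ℝ, IntegrableOn (fun _ : ℝ => k) I := fun k =>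
    integrableOn_const (by simp [hI])
  have vol : ∀ k : ℝ, ∫ _ in I, k = 2 * Real.pi * k := by
    intro k
    rw [setIntegral_const, hI, Real.volume_real_Ioc_of_le (by linarith), smul_eq_mul]
    ring
  have i4 : IntegrableOn (fun ω => (1 / c - 1 + Real.log c) + a / c * min θ (S ω)) I :=
    (ic _).add (i3.const_mul _)
  have key : ∫ ω in I, Real.log (1 + a * S ω) ≤
      ∫ ω in I, (max 0 (Real.log (S ω / θ)) +
        ((1 / c - 1 + Real.log c) + a / c * min θ (S ω))) := by
    refine setIntegral_mono_on i1 (i2.add i4) measurableSet_Ioc ?_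
    intro ω hω
    refine (log_one_add_mul_le (hS0 ω hω) hθ ha0 hc0).trans_eq ?_
    ring
  rw [integral_add i2 i4, integral_add (ic _) (i3.const_mul _),
    vol, integral_const_mul] at key
  have hm' : ∫ ω in I, min θ (S ω) = 2 * Real.pi * D := by
    rw [hDθ]; field_simp
  have hval : a / c * (2 * Real.pi * D) = 2 * Real.pi * ((1 - 1 / c) / c) := by
    rw [← haD]; ring
  rw [hm', hval] at key
  -- The averaged slack is `-(1 - 1/c)²`, negative because `c > 1`.
  have hneg : (1 / c - 1) + (1 - 1 / c) / c < 0 := by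
    have h1 : 1 / c < 1 := (div_lt_one hc0).2 hc1
    have h2 : (1 / c - 1) + (1 - 1 / c) / c = -(1 - 1 / c) ^ 2 := by ring
    rw [h2]
    nlinarith
  have hfin : (∫ ω in I, Real.log (1 + a * S ω)) - ∫ ω in I, max 0 (Real.log (S ω / θ))
      < 2 * Real.pi * Real.log c := by
    nlinarith
  calc _ = ((∫ ω in I, Real.log (1 + a * S ω)) - ∫ ω in I, max 0 (Real.log (S ω / θ)))
        / (4 * Real.pi * Real.log 2) := by field_simp
    _ < 2 * Real.pi * Real.log c / (4 * Real.pi * Real.log 2) := by gcongr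
    _ = _ := by field_simp; ring
end
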